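/- arXiv:1301.5953 — 4 statements merged into one kernel-verified Lean document; each statement's English description precedes it below -/
import Mathlib

section
/- Let G be a finite interval graph with interval representation (I_v), and let u, w be distinct vertices with I_u = [a,a] and I_w = [b,b], where a ≤ ℓ(v) for every vertex v and b ≥ r(v) for every vertex v. If G contains a spanning 3-stave between u and w, then G is Hamilton-connected. -/
/-!
The proof rests on monotone tilings of `[a, b]` by subintervals of the given intervals.

*Straightening.* A `u`-`w` path yields points `a = x₀, x₁, …, xₙ = b` such that the `i`-th inner
vertex has an interval containing `xᵢ₋₁` and `xᵢ` (`Thread`). Its inner vertices can be reordered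
so that the points increase (`Tile`): if `x` is a breakpoint of a tiling and a new interval contains
`x` and `z`, the interval can be inserted so that `z` becomes a breakpoint
(`Tile.insert_right`, `Tile.insert_left`). Hence the three paths of a stave give three disjoint
lists of vertices, each tiling `[a, b]`; the vertices `u` and `w` are put at the ends of the first.

*Merging.* A tiling of `[c, e]` absorbs a tiling of `[d, e]` and a tiling of `[c, d']`, for
`d, d' ∈ [c, e]` (`Tile.merge_right`, `Tile.merge_left`).

*Hamilton paths.* Let `s` and `t` be distinct vertices. If they lie in different tilings
`A₁ s B₁` and `A₂ t B₂`, with third tiling `Q`, then merge `A₂` and `B₁` into `Q` to get a tiling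
`M` of `[a, b]`; the path is `s`, `A₁` reversed, `M`, `B₂` reversed, `t`. If they lie in the same
tiling `A s B t C`, cut another tiling `X f Y` at a tile `f` containing the right end of `s`; then
`X f B` is a tiling starting at `a` and `Y` is one ending at `b`, so both merge with the third
tiling into a tiling `M` of `[a, b]`; the path is `s`, `A` reversed, `M`, `C` reversed, `t`.
-/

open SimpleGraph

/-- A spanning `p`-stave between `u` and `w`: `p` internally vertex-disjoint paths from
`u` to `w` whose vertex sets together cover all vertices of the graph. -/
def HasSpanningStave {V : Type} (G : SimpleGraph V) (u w : V) (p : ℕ) : Prop :=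
  ∃ P : Fin p → G.Walk u w,
    (∀ i, (P i).IsPath) ∧
    (∀ i j, i ≠ j → ∀ v, v ∈ (P i).support → v ∈ (P j).support → v = u ∨ v = w) ∧
    (∀ v, ∃ i, v ∈ (P i).support)

/-- A graph is Hamilton-connected if any two distinct vertices are joined by a
Hamilton path. -/
def HamiltonConnected {W : Type} [DecidableEq W] (H : SimpleGraph W) : Prop :=
  ∀ s t : W, s ≠ t → ∃ p : H.Walk s t, p.IsHamiltonian

/-- `G` is `k`-Hamilton-connected: `G - S` is Hamilton-connected for every vertex set `S`
with `|S| ≤ k`. -/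
def KHamiltonConnected {V : Type} [DecidableEq V] (G : SimpleGraph V) (k : ℕ) : Prop :=
  ∀ S : Finset V, S.card ≤ k → HamiltonConnected (G.induce ((↑S : Set V)ᶜ))

namespace IntervalStave

variable {V : Type} {l r : V → ℝ}

/-! ### Threads and tilings -/

/-- `Thread l r x L y`: there are points `x = x₀, x₁, …, xₙ = y` such that the interval
`[l v, r v]` of the `i`-th vertex `v` of `L` contains `xᵢ₋₁` and `xᵢ`. For `L = []` this says
`x = y`. -/
def Thread (l r : V → ℝ) : ℝ → List V → ℝ → Prop
  | x, [], y => x = y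
  | x, v :: L, y => ∃ z, (l v ≤ x ∧ x ≤ r v) ∧ (l v ≤ z ∧ z ≤ r v) ∧ Thread l r z L y

/-- `Tile l r x L y`: a thread whose points satisfy `x = x₀ ≤ x₁ ≤ … ≤ xₙ = y`, so that
`[x, y]` is tiled in order by subintervals of the intervals of the vertices in `L`. -/
def Tile (l r : V → ℝ) : ℝ → List V → ℝ → Prop
  | x, [], y => x = y
  | x, v :: L, y => ∃ z, (l v ≤ x ∧ x ≤ z ∧ z ≤ r v) ∧ Tile l r z L y

lemma Thread.append {x y z : ℝ} {L M : List V} (h : Thread l r x L y) (h' : Thread l r y M z) :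
    Thread l r x (L ++ M) z := by
  induction L generalizing x with
  | nil => obtain rfl : x = y := h; exact h'
  | cons v L ih =>
    obtain ⟨p, hx, hp, h⟩ := h
    exact ⟨p, hx, hp, ih h⟩

lemma Thread.reverse {x y : ℝ} {L : List V} (h : Thread l r x L y) :
    Thread l r y L.reverse x := by
  induction L generalizing x with
  | nil => obtain rfl : x = y := h; rfl
  | cons v L ih =>
    obtain ⟨p, hx, hp, h⟩ := h
    rw [List.reverse_cons]
    exact (ih h).append ⟨x, hp, hx, rfl⟩

lemma Tile.thread {x y : ℝ} {L : List V} (h : Tile l r x L y) : Thread l r x L y := by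
  induction L generalizing x with
  | nil => exact h
  | cons v L ih =>
    obtain ⟨p, ⟨h1, h2, h3⟩, h⟩ := h
    exact ⟨p, ⟨h1, h2.trans h3⟩, ⟨h1.trans h2, h3⟩, ih h⟩

lemma Tile.le {x y : ℝ} {L : List V} (h : Tile l r x L y) : x ≤ y := by
  induction L generalizing x with
  | nil => exact le_of_eq h
  | cons v L ih =>
    obtain ⟨p, ⟨_, h2, _⟩, h⟩ := h
    exact h2.trans (ih h)

lemma Tile.append {x y z : ℝ} {L M : List V} (h : Tile l r x L y) (h' : Tile l r y M z) :
    Tile l r x (L ++ M) z := by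
  induction L generalizing x with
  | nil => obtain rfl : x = y := h; exact h'
  | cons v L ih =>
    obtain ⟨p, hp, h⟩ := h
    exact ⟨p, hp, ih h⟩

lemma Tile.split {x z : ℝ} {L M : List V} (h : Tile l r x (L ++ M) z) :
    ∃ y, Tile l r x L y ∧ Tile l r y M z := by
  induction L generalizing x with
  | nil => exact ⟨x, rfl, h⟩
  | cons v L ih =>
    obtain ⟨p, hp, h⟩ := h
    obtain ⟨y, h1, h2⟩ := ih h
    exact ⟨y, ⟨p, hp, h1⟩, h2⟩

lemma Tile.bounds {a b x y : ℝ} {L : List V} (ha : ∀ v, a ≤ l v) (hb : ∀ v, r v ≤ b)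
    (h : Tile l r x L y) (hL : L ≠ []) : a ≤ x ∧ y ≤ b := by
  induction L generalizing x with
  | nil => exact absurd rfl hL
  | cons v L ih =>
    obtain ⟨p, ⟨h1, h2, h3⟩, h⟩ := h
    refine ⟨(ha v).trans h1, ?_⟩
    by_cases hnil : L = []
    · subst hnil
      obtain rfl : p = y := h
      exact h3.trans (hb v)
    · exact (ih h hnil).2

/-! ### Straightening a path -/

/-- A vertex whose interval contains the left end `x` of a tiling and a point `z ≥ x` can be
inserted so that `z` becomes a breakpoint. -/
lemma Tile.insert_right {x z e : ℝ} {L : List V} (h : Tile l r x L e) {v : V}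
    (hx : l v ≤ x) (hxz : x ≤ z) (hz : z ≤ r v) :
    ∃ A B e', Tile l r x A z ∧ Tile l r z B e' ∧ e ≤ e' ∧ (A ++ B).Perm (v :: L) := by
  induction L generalizing x with
  | nil =>
    obtain rfl : x = e := h
    exact ⟨[v], [], z, ⟨z, ⟨hx, hxz, hz⟩, rfl⟩, rfl, hxz, .refl _⟩
  | cons f L ih =>
    obtain ⟨d, ⟨h1, h2, h3⟩, h⟩ := h
    rcases le_total z d with hzd | hdz
    · exact ⟨[v], f :: L, e, ⟨z, ⟨hx, hxz, hz⟩, rfl⟩, ⟨d, ⟨h1.trans hxz, hzd, h3⟩, h⟩, le_rfl,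
        .refl _⟩
    · obtain ⟨A, B, e', hA, hB, he, hp⟩ := ih h (hx.trans h2) hdz
      exact ⟨f :: A, B, e', ⟨d, ⟨h1, h2, h3⟩, hA⟩, hB, he, (hp.cons f).trans (.swap _ _ _)⟩

/-- A vertex whose interval contains the right end `x` of a tiling and a point `z ≤ x` can be
inserted so that `z` becomes a breakpoint. -/
lemma Tile.insert_left {x z c : ℝ} {L : List V} (h : Tile l r c L x) {v : V}
    (hz : l v ≤ z) (hxz : z ≤ x) (hx : x ≤ r v) :
    ∃ A B c', Tile l r c' A z ∧ Tile l r z B x ∧ c' ≤ c ∧ (A ++ B).Perm (v :: L) := by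
  rcases le_total z c with hzc | hcz
  · exact ⟨[], v :: L, z, rfl, ⟨c, ⟨hz, hzc, h.le.trans hx⟩, h⟩, hzc, .refl _⟩
  suffices ∃ A B, Tile l r c A z ∧ Tile l r z B x ∧ (A ++ B).Perm (v :: L) by
    obtain ⟨A, B, h1, h2, h3⟩ := this
    exact ⟨A, B, c, h1, h2, le_rfl, h3⟩
  induction L generalizing c with
  | nil =>
    obtain rfl : c = x := h
    obtain rfl : c = z := le_antisymm hcz hxz
    exact ⟨[], [v], rfl, ⟨c, ⟨hz, le_rfl, hx⟩, rfl⟩, .refl _⟩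
  | cons f L ih =>
    obtain ⟨d, ⟨h1, h2, h3⟩, h⟩ := h
    rcases le_total z d with hzd | hdz
    · exact ⟨[f], v :: L, ⟨z, ⟨h1, hcz, hzd.trans h3⟩, rfl⟩, ⟨d, ⟨hz, hzd, h.le.trans hx⟩, h⟩,
        .swap _ _ _⟩
    · obtain ⟨A, B, hA, hB, hp⟩ := ih h hdz
      exact ⟨f :: A, B, ⟨d, ⟨h1, h2, h3⟩, hA⟩, hB, (hp.cons f).trans (.swap _ _ _)⟩

/-- A thread starting at a breakpoint `x` of a tiling can be absorbed into the tiling, one vertex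
after the other, in such a way that its end `y` becomes a breakpoint. -/
lemma Thread.straighten {c x y e : ℝ} {L A B : List V} (h : Thread l r x L y)
    (hA : Tile l r c A x) (hB : Tile l r x B e) :
    ∃ A' B' c' e', Tile l r c' A' y ∧ Tile l r y B' e' ∧ c' ≤ c ∧ e ≤ e' ∧
      (A' ++ B').Perm (A ++ B ++ L) := by
  classical
  induction L generalizing c x e A B with
  | nil =>
    obtain rfl : x = y := h
    exact ⟨A, B, c, e, hA, hB, le_rfl, le_rfl, by simp⟩
  | cons v L ih =>
    obtain ⟨z, ⟨hx1, hx2⟩, ⟨hz1, hz2⟩, h⟩ := h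
    rcases le_total x z with hxz | hzx
    · obtain ⟨B1, B2, e1, hB1, hB2, he, hp⟩ := hB.insert_right hx1 hxz hz2
      obtain ⟨A', B', c', e', h1, h2, h3, h4, h5⟩ := ih h (hA.append hB1) hB2
      refine ⟨A', B', c', e', h1, h2, h3, he.trans h4, h5.trans ?_⟩
      rw [List.perm_iff_count] at hp ⊢
      intro q
      have := hp q
      simp only [List.count_append, List.count_cons] at this ⊢
      omega
    · obtain ⟨A1, A2, c1, hA1, hA2, hc, hp⟩ := hA.insert_left hz1 hzx hx2
      obtain ⟨A', B', c', e', h1, h2, h3, h4, h5⟩ := ih h hA1 (hA2.append hB)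
      refine ⟨A', B', c', e', h1, h2, h3.trans hc, h4, h5.trans ?_⟩
      rw [List.perm_iff_count] at hp ⊢
      intro q
      have := hp q
      simp only [List.count_append, List.count_cons] at this ⊢
      omega

lemma Thread.exists_tile {a b : ℝ} {L : List V} (h : Thread l r a L b) (hab : a ≤ b)
    (ha : ∀ v, a ≤ l v) (hb : ∀ v, r v ≤ b) :
    ∃ L', Tile l r a L' b ∧ L'.Perm L := by
  obtain ⟨A, B, c, e, hA, hB, hc, he, hp⟩ :=
    h.straighten (A := []) (B := []) (c := a) (e := a) rfl rfl
  have hT := hA.append hB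
  refine ⟨A ++ B, ?_, by simpa using hp⟩
  by_cases hL : A ++ B = []
  · obtain ⟨rfl, rfl⟩ := List.append_eq_nil_iff.1 hL
    obtain rfl : c = b := hA
    exact le_antisymm hab hc
  · obtain ⟨h1, h2⟩ := hT.bounds ha hb hL
    obtain rfl : c = a := le_antisymm hc h1
    obtain rfl : e = b := le_antisymm h2 (hB.le)
    exact hT

/-! ### Merging tilings -/

/-- Once the first tiling has reached the tile containing `d`, that tile is cut off at `d`, and the
two tilings exchange roles. -/
lemma Tile.merge_right {c d e : ℝ} {B Q : List V} (hB : Tile l r c B e) (hQ : Tile l r d Q e)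
    (hcd : c ≤ d) : ∃ M, Tile l r c M e ∧ M.Perm (B ++ Q) := by
  induction hn : B.length + Q.length generalizing c d B Q with
  | zero =>
    obtain ⟨h1, h2⟩ := Nat.add_eq_zero_iff.1 hn
    rw [List.length_eq_zero_iff] at h1 h2
    subst h1 h2
    exact ⟨[], hB, .refl _⟩
  | succ n ih =>
    cases B with
    | nil =>
      obtain rfl : c = e := hB
      obtain rfl : c = d := le_antisymm hcd hQ.le
      exact ⟨Q, hQ, .refl _⟩
    | cons f B =>
      obtain ⟨g, ⟨h1, h2, h3⟩, hB⟩ := hB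
      rw [List.length_cons] at hn
      rcases le_total d g with hdg | hgd
      · obtain ⟨M, hM, hp⟩ := ih hQ hB hdg (by omega)
        exact ⟨f :: M, ⟨d, ⟨h1, hcd, hdg.trans h3⟩, hM⟩,
          (hp.trans List.perm_append_comm).cons f⟩
      · obtain ⟨M, hM, hp⟩ := ih hB hQ hgd (by omega)
        exact ⟨f :: M, ⟨g, ⟨h1, h2, h3⟩, hM⟩, hp.cons f⟩

/-- Tilings are preserved by the reflection `x ↦ -x` of the real line, in reverse order. -/
lemma Tile.neg {x y : ℝ} {L : List V} (h : Tile l r x L y) :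
    Tile (fun v => -r v) (fun v => -l v) (-y) L.reverse (-x) := by
  induction L generalizing x with
  | nil => obtain rfl : x = y := h; rfl
  | cons v L ih =>
    obtain ⟨p, ⟨h1, h2, h3⟩, h⟩ := h
    rw [List.reverse_cons]
    exact (ih h).append ⟨-x, ⟨neg_le_neg h3, neg_le_neg h2, neg_le_neg h1⟩, rfl⟩

lemma Tile.merge_left {c d e : ℝ} {B Q : List V} (hB : Tile l r c B e) (hQ : Tile l r c Q d)
    (hde : d ≤ e) : ∃ M, Tile l r c M e ∧ M.Perm (B ++ Q) := by
  obtain ⟨M, hM, hp⟩ := hB.neg.merge_right hQ.neg (neg_le_neg hde)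
  refine ⟨M.reverse, by simpa using hM.neg, (List.reverse_perm M).trans (hp.trans ?_)⟩
  exact (List.reverse_perm B).append (List.reverse_perm Q)

/-- A tiling of `[a, b]` absorbs a tiling ending in `b` and a tiling starting in `a`. -/
lemma Tile.merge_both {a b d d' : ℝ} {Q X Y : List V} (hQ : Tile l r a Q b)
    (hX : Tile l r a X d) (hd : d ≤ b) (hY : Tile l r d' Y b) (hd' : a ≤ d') :
    ∃ M, Tile l r a M b ∧ M.Perm (Q ++ X ++ Y) := by
  obtain ⟨M, hM, hp⟩ := hQ.merge_left hX hd
  obtain ⟨M', hM', hp'⟩ := hM.merge_right hY hd'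
  exact ⟨M', hM', hp'.trans (hp.append_right Y)⟩

/-- A tiling of `[a, b]` is cut at `d` by cutting the tile that contains `d`. -/
lemma Tile.cut {a b d : ℝ} {Q : List V} (h : Tile l r a Q b) (had : a ≤ d) (hdb : d ≤ b) :
    ∃ X Y d', Q = X ++ Y ∧ Tile l r a X d ∧ Tile l r d' Y b ∧ d ≤ d' := by
  induction Q generalizing a with
  | nil =>
    obtain rfl : a = b := h
    obtain rfl : a = d := le_antisymm had hdb
    exact ⟨[], [], a, rfl, rfl, rfl, le_rfl⟩
  | cons f Q ih =>
    obtain ⟨g, ⟨h1, h2, h3⟩, h⟩ := h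
    rcases le_total d g with hdg | hgd
    · exact ⟨[f], Q, g, rfl, ⟨d, ⟨h1, had, hdg.trans h3⟩, rfl⟩, h, hdg⟩
    · obtain ⟨X, Y, d', rfl, hX, hY, hd⟩ := ih h hgd
      exact ⟨f :: X, Y, d', rfl, ⟨g, ⟨h1, h2, h3⟩, hX⟩, hY, hd⟩

/-! ### Hamilton paths through three tilings -/

/-- Some ordering of the vertices in `L` that starts with `s` and ends with `t` is a thread. -/
def Joined (l r : V → ℝ) (s t : V) (L : List V) : Prop :=
  ∃ K x y, Thread l r x (s :: (K ++ [t])) y ∧ (s :: (K ++ [t])).Perm L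

lemma Joined.symm {s t : V} {L : List V} (h : Joined l r s t L) : Joined l r t s L := by
  obtain ⟨K, x, y, h, hp⟩ := h
  have e : (s :: (K ++ [t])).reverse = t :: (K.reverse ++ [s]) := by simp
  exact ⟨K.reverse, y, x, e ▸ h.reverse, (e ▸ List.reverse_perm _ : List.Perm _ _).trans hp⟩

lemma Joined.perm {s t : V} {L L' : List V} (h : Joined l r s t L) (hp : L.Perm L') :
    Joined l r s t L' := by
  obtain ⟨K, x, y, h, hp'⟩ := h
  exact ⟨K, x, y, h, hp'.trans hp⟩

/-- From `s` to the left end `a` along `A`, through the tiling `M` of `[a, b]`, and from the right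
end `b` back to `t` along `C`. -/
lemma joined_of_tiles {a b x y : ℝ} {s t : V} {A M C : List V} (hs : l s ≤ x ∧ x ≤ r s)
    (hA : Tile l r a A x) (hM : Tile l r a M b) (hC : Tile l r y C b) (ht : l t ≤ y ∧ y ≤ r t) :
    Joined l r s t (s :: (A ++ M ++ C ++ [t])) := by
  refine ⟨A.reverse ++ M ++ C.reverse, x, y, ?_, ?_⟩
  · have h1 : Thread l r x [s] x := ⟨x, hs, hs, rfl⟩
    have h2 : Thread l r y [t] y := ⟨y, ht, ht, rfl⟩
    exact h1.append
      (((hA.thread.reverse.append hM.thread).append hC.thread.reverse).append h2)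
  · exact ((((List.reverse_perm A).append_right M).append (List.reverse_perm C)).append_right
      [t]).cons s

lemma joined_of_mem_of_mem {a b : ℝ} {s t : V} {Q₁ Q₂ Q₃ : List V} (h₁ : Tile l r a Q₁ b)
    (h₂ : Tile l r a Q₂ b) (h₃ : Tile l r a Q₃ b) (hs : s ∈ Q₁) (ht : t ∈ Q₂) :
    Joined l r s t (Q₁ ++ Q₂ ++ Q₃) := by
  classical
  obtain ⟨A₁, B₁, rfl⟩ := List.append_of_mem hs
  obtain ⟨A₂, B₂, rfl⟩ := List.append_of_mem ht
  obtain ⟨x, hA₁, x', ⟨s1, s2, s3⟩, hB₁⟩ := h₁.split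
  obtain ⟨y, hA₂, y', ⟨t1, t2, t3⟩, hB₂⟩ := h₂.split
  obtain ⟨M, hM, hp⟩ := h₃.merge_both hA₂ (t2.trans hB₂.le) hB₁ (hA₁.le.trans s2)
  refine (joined_of_tiles ⟨s1, s2.trans s3⟩ hA₁ hM hB₂ ⟨t1.trans t2, t3⟩).perm ?_
  rw [List.perm_iff_count] at hp ⊢
  intro q
  have := hp q
  simp only [List.count_append, List.count_cons, List.count_nil] at this ⊢
  omega

lemma joined_of_append {a b : ℝ} {s t : V} {A B C Q₂ Q₃ : List V}
    (h₁ : Tile l r a (A ++ s :: (B ++ t :: C)) b)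
    (h₂ : Tile l r a Q₂ b) (h₃ : Tile l r a Q₃ b) :
    Joined l r s t (A ++ s :: (B ++ t :: C) ++ Q₂ ++ Q₃) := by
  classical
  obtain ⟨x, hA, x', ⟨s1, s2, s3⟩, h₁⟩ := h₁.split
  obtain ⟨y, hB, y', ⟨t1, t2, t3⟩, hC⟩ := h₁.split
  obtain ⟨X, Y, d', rfl, hX, hY, hd⟩ := h₂.cut (hA.le.trans s2) h₁.le
  obtain ⟨M, hM, hp⟩ :=
    h₃.merge_both (hX.append hB) (t2.trans hC.le) hY ((hA.le.trans s2).trans hd)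
  refine (joined_of_tiles ⟨s1, s2.trans s3⟩ hA hM hC ⟨t1.trans t2, t3⟩).perm ?_
  rw [List.perm_iff_count] at hp ⊢
  intro q
  have := hp q
  simp only [List.count_append, List.count_cons, List.count_nil] at this ⊢
  omega

lemma joined_of_mem {a b : ℝ} {s t : V} {Q₁ Q₂ Q₃ : List V} (h₁ : Tile l r a Q₁ b)
    (h₂ : Tile l r a Q₂ b) (h₃ : Tile l r a Q₃ b) (hs : s ∈ Q₁) (ht : t ∈ Q₁) (hst : s ≠ t) :
    Joined l r s t (Q₁ ++ Q₂ ++ Q₃) := by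
  obtain ⟨A, B, rfl⟩ := List.append_of_mem hs
  rcases List.mem_append.1 ht with ht | ht
  · obtain ⟨A₁, A₂, rfl⟩ := List.append_of_mem ht
    have e : A₁ ++ t :: A₂ ++ s :: B = A₁ ++ t :: (A₂ ++ s :: B) := by simp
    rw [e] at h₁ ⊢
    exact (joined_of_append h₁ h₂ h₃).symm
  · obtain ⟨B₁, B₂, rfl⟩ := List.append_of_mem ((List.mem_cons.1 ht).resolve_left hst.symm)
    exact joined_of_append h₁ h₂ h₃

lemma joined_of_three_tiles {a b : ℝ} {s t : V} {Q : Fin 3 → List V}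
    (h : ∀ i, Tile l r a (Q i) b) {i j : Fin 3} (hs : s ∈ Q i) (ht : t ∈ Q j) (hst : s ≠ t) :
    Joined l r s t (Q 0 ++ Q 1 ++ Q 2) := by
  classical
  have key : ∀ i j k : Fin 3, i ≠ j → i ≠ k → j ≠ k →
      (Q i ++ Q j ++ Q k).Perm (Q 0 ++ Q 1 ++ Q 2) := by
    intro i j k hij hik hjk
    rw [List.perm_iff_count]
    intro q
    fin_cases i <;> fin_cases j <;> fin_cases k <;> simp_all [List.count_append] <;> omega
  have ex : ∀ i j : Fin 3, i ≠ j → ∃ k, i ≠ k ∧ j ≠ k := by decide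
  by_cases hij : i = j
  · subst hij
    obtain ⟨j, hj⟩ : ∃ j : Fin 3, i ≠ j := exists_ne i |>.imp fun _ h => h.symm
    obtain ⟨k, hik, hjk⟩ := ex i j hj
    exact (joined_of_mem (h i) (h j) (h k) hs ht hst).perm (key i j k hj hik hjk)
  · obtain ⟨k, hik, hjk⟩ := ex i j hij
    exact (joined_of_mem_of_mem (h i) (h j) (h k) hs ht).perm (key i j k hij hik hjk)

/-! ### Passing between walks and threads -/

variable {G : SimpleGraph V}

lemma thread_of_isChain {b : ℝ} {v w : V} {L : List V} (hwl : l w = b) (hwr : r w = b)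
    (hG : ∀ p q : V, G.Adj p q → (Set.Icc (l p) (r p) ∩ Set.Icc (l q) (r q)).Nonempty)
    (h : List.IsChain G.Adj (v :: (L ++ [w]))) :
    ∃ y, (l v ≤ y ∧ y ≤ r v) ∧ Thread l r y L b := by
  induction L generalizing v with
  | nil =>
    obtain ⟨y, hy, hy'⟩ := hG v w (List.isChain_cons_cons.1 h).1
    obtain rfl : y = b := le_antisymm (hy'.2.trans hwr.le) (hwl.ge.trans hy'.1)
    exact ⟨y, hy, rfl⟩
  | cons p L ih =>
    obtain ⟨h1, h2⟩ := List.isChain_cons_cons.1 h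
    obtain ⟨z, hz, hT⟩ := ih h2
    obtain ⟨y, hy, hy'⟩ := hG v p h1
    exact ⟨y, hy, z, hy', hz, hT⟩

lemma Thread.exists_walk {x y : ℝ} {s t : V} {K : List V}
    (hG : ∀ p q : V, p ≠ q → (Set.Icc (l p) (r p) ∩ Set.Icc (l q) (r q)).Nonempty → G.Adj p q)
    (h : Thread l r x (s :: (K ++ [t])) y) (hn : (s :: (K ++ [t])).Nodup) :
    ∃ p : G.Walk s t, p.support = s :: (K ++ [t]) := by
  induction K generalizing s x with
  | nil =>
    obtain ⟨z, _, hz, _, hz', _⟩ := h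
    have : G.Adj s t := hG s t (by simpa using hn) ⟨z, hz, hz'⟩
    exact ⟨.cons this .nil, rfl⟩
  | cons q K ih =>
    obtain ⟨z, _, hz, h⟩ := h
    have hz' := h
    obtain ⟨_, hz', _⟩ := hz'
    obtain ⟨p, hp⟩ := ih h (List.nodup_cons.1 hn).2
    have hsq : s ≠ q := by
      rintro rfl
      exact (List.nodup_cons.1 hn).1 (by simp)
    exact ⟨.cons (hG s q hsq ⟨z, hz, hz'⟩) p, by simp [hp]⟩

/-- Here `L` is the list of inner vertices of the walk. -/
lemma exists_support_eq {u w : V} (huw : u ≠ w) (p : G.Walk u w) :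
    ∃ L, p.support = u :: (L ++ [w]) := by
  cases p with
  | nil => exact absurd rfl huw
  | cons h p =>
    refine ⟨p.support.dropLast, ?_⟩
    rw [SimpleGraph.Walk.support_cons]
    congr 1
    conv_lhs => rw [← List.dropLast_append_getLast p.support_ne_nil, p.getLast_support]

end IntervalStave

/-- Let `G` be a finite interval graph with an interval representation in which `u` and `w`
are distinct vertices whose intervals are the single points `a` and `b`, with `a` the
leftmost point and `b` the rightmost point of the representation. If `G` has a spanning
`3`-stave between `u` and `w`, then `G` is Hamilton-connected. -/
theorem hamiltonConnected_of_spanning_three_stave {V : Type} [Fintype V] [DecidableEq V]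
    (G : SimpleGraph V)
    (l r : V → ℝ) (hlr : ∀ v, l v ≤ r v)
    (hadj : ∀ v₁ v₂ : V, v₁ ≠ v₂ →
      (G.Adj v₁ v₂ ↔ (Set.Icc (l v₁) (r v₁) ∩ Set.Icc (l v₂) (r v₂)).Nonempty))
    (u w : V) (huw : u ≠ w) (a b : ℝ)
    (hul : l u = a) (hur : r u = a) (hwl : l w = b) (hwr : r w = b)
    (ha : ∀ v, a ≤ l v) (hb : ∀ v, r v ≤ b)
    (hstave : HasSpanningStave G u w 3) :
    HamiltonConnected G := by
  classical
  intro s t hst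
  have hab : a ≤ b := hul ▸ (hlr u).trans (hb u)
  obtain ⟨P, hP, hdisj, hcov⟩ := hstave
  choose L hL using fun i => IntervalStave.exists_support_eq huw (P i)
  have hT : ∀ i, ∃ Q, IntervalStave.Tile l r a Q b ∧ Q.Perm (L i) := by
    intro i
    obtain ⟨y, hy, h⟩ := IntervalStave.thread_of_isChain hwl hwr
      (fun p q h => (hadj p q h.ne).1 h) (hL i ▸ (P i).isChain_adj_support)
    obtain rfl : y = a := le_antisymm (hy.2.trans hur.le) (hul.ge.trans hy.1)
    exact h.exists_tile hab ha hb
  choose Q hQ hQL using hT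
  have hn : ∀ i, (u :: (L i ++ [w])).Nodup := fun i => hL i ▸ (hP i).support_nodup
  have huL : ∀ i, u ∉ L i := fun i h => (List.nodup_cons.1 (hn i)).1 (by simp [h])
  have hwL : ∀ i, w ∉ L i := fun i h => by
    have := (List.nodup_cons.1 (hn i)).2
    rw [List.nodup_append] at this
    exact this.2.2 w h w (by simp) rfl
  have hLn : ∀ i, (L i).Nodup := fun i =>
    ((List.nodup_append.1 (List.nodup_cons.1 (hn i)).2)).1
  have hLd : ∀ i j, i ≠ j → ∀ v, v ∈ L i → v ∉ L j := by
    intro i j hij v hi hj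
    rcases hdisj i j hij v (by simp [hL, hi]) (by simp [hL, hj]) with rfl | rfl
    · exact huL i hi
    · exact hwL i hi
  have hLc : ∀ v, v = u ∨ v = w ∨ ∃ i, v ∈ L i := by
    intro v
    obtain ⟨i, hi⟩ := hcov v
    rw [hL, List.mem_cons, List.mem_append, List.mem_singleton] at hi
    tauto
  -- The end-vertices become degenerate tiles of the first tiling.
  let R : Fin 3 → List V := ![u :: (Q 0 ++ [w]), Q 1, Q 2]
  have hR : ∀ i, IntervalStave.Tile l r a (R i) b := by
    intro i
    fin_cases i
    · exact ⟨a, ⟨hul.le, le_rfl, hur.ge⟩,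
        (hQ 0).append ⟨b, ⟨hwl.le, le_rfl, hwr.ge⟩, rfl⟩⟩
    · exact hQ 1
    · exact hQ 2
  have hRp : (R 0 ++ R 1 ++ R 2).Perm (u :: w :: (L 0 ++ L 1 ++ L 2)) := by
    rw [List.perm_iff_count]
    intro q
    have h0 := List.perm_iff_count.1 (hQL 0) q
    have h1 := List.perm_iff_count.1 (hQL 1) q
    have h2 := List.perm_iff_count.1 (hQL 2) q
    simp [R, List.count_append, List.count_cons, h0, h1, h2]
    omega
  have hmem : ∀ v, ∃ i, v ∈ R i := by
    intro v
    rcases hLc v with rfl | rfl | ⟨i, hi⟩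
    · exact ⟨0, by simp [R]⟩
    · exact ⟨0, by simp [R]⟩
    · refine ⟨i, ?_⟩
      have := (hQL i).mem_iff.2 hi
      fin_cases i <;> simp_all [R]
  have hnd : (R 0 ++ R 1 ++ R 2).Nodup := by
    rw [hRp.nodup_iff]
    have h01 := hLd 0 1 (by decide)
    have h02 := hLd 0 2 (by decide)
    have h12 := hLd 1 2 (by decide)
    simp only [List.nodup_cons, List.nodup_append, List.mem_cons, List.mem_append]
    refine ⟨by simp [huw, huL], by simp [hwL], ⟨hLn 0, hLn 1, ?_⟩, hLn 2, ?_⟩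
    · rintro v hv _ hv' rfl
      exact h01 v hv hv'
    · rintro v hv _ hv' rfl
      rcases hv with hv | hv
      · exact h02 v hv hv'
      · exact h12 v hv hv'
  obtain ⟨i, hi⟩ := hmem s
  obtain ⟨j, hj⟩ := hmem t
  obtain ⟨K, x, y, hK, hp⟩ := IntervalStave.joined_of_three_tiles hR hi hj hst
  have hKn := hp.nodup_iff.2 hnd
  obtain ⟨p, hps⟩ := hK.exists_walk (G := G) (fun p q hpq h => (hadj p q hpq).2 h) hKn
  refine ⟨p, fun v => ?_⟩
  rw [hps]
  refine List.count_eq_one_of_mem hKn (hp.mem_iff.2 ?_)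
  obtain ⟨k, hk⟩ := hmem v
  fin_cases k <;> simp_all
end

section
/- Let G be a finite simple graph that is not complete, let u and w be distinct simplicial vertices of G, and let p ≥ 1 be an integer. Suppose G contains a spanning p-stave between u and w such that for each path of the stave, the set of its internal vertices dominates G. Then scat(G) ≤ 2 − p. -/
/-!
Deleting a simplicial vertex from `S` does not decrease the number of components of `G - S`
(`numCompDel_le_erase`), because its neighbours form a clique; so one may assume `u, w ∉ S`.

If `G - S` is disconnected, every path `P i` of the stave meets `S`: otherwise `P i` would be a
connected dominating subgraph of `G - S`. For a component `C` of `G - S` that contains neither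
`u` nor `w`, take a vertex of `C` and follow its path towards `w` until it first meets `S`, at `s`.
The predecessor of `s` lies in `C`, so `C ↦ s` is injective. Moreover `s` is not the first vertex
of `S` on its path, since the predecessor of that one lies in the component of `u`. Hence there are
at most `|S| - p` such components, and at most two further ones.
-/

open SimpleGraph

/-- The number of connected components of the graph `G - S` obtained from `G` by
deleting the vertices of `S`. -/
noncomputable def numCompDel {V : Type} (G : SimpleGraph V) (S : Finset V) : ℕ :=
  Nat.card ((G.induce ((↑S : Set V)ᶜ)).ConnectedComponent)

/-- The scattering number of `G` is at most `k`; for a complete graph `scat(G) = -∞`,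
so the condition holds vacuously (a complete graph has no vertex cut). -/
def ScatAtMost {V : Type} (G : SimpleGraph V) (k : ℤ) : Prop :=
  ∀ S : Finset V, 2 ≤ numCompDel G S → (numCompDel G S : ℤ) - (S.card : ℤ) ≤ k

/-- `G` is an interval graph: vertices can be assigned nonempty closed real intervals such
that two distinct vertices are adjacent iff their intervals intersect. -/
def IsIntervalGraph {V : Type} (G : SimpleGraph V) : Prop :=
  ∃ l r : V → ℝ, (∀ v, l v ≤ r v) ∧
    ∀ u v : V, u ≠ v →
      (G.Adj u v ↔ (Set.Icc (l u) (r u) ∩ Set.Icc (l v) (r v)).Nonempty)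

/-- A segment of a walk that avoids `S` lies in one component of `G - S`. -/
lemma reachable_getVert_of_avoid {V : Type} {G : SimpleGraph V} {u w : V} (S : Finset V)
    (P : G.Walk u w) (m l : ℕ) (hml : m ≤ l)
    (h : ∀ k, m ≤ k → k ≤ l → P.getVert k ∉ S) :
    (G.induce ((↑S : Set V)ᶜ)).Reachable
      ⟨P.getVert m, by simpa using h m le_rfl hml⟩ ⟨P.getVert l, by simpa using h l hml le_rfl⟩ := by
  induction l, hml using Nat.le_induction with
  | base => exact Reachable.refl _
  | succ n hmn ih =>
    refine (ih fun k h1 h2 => h k h1 (by omega)).trans ?_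
    by_cases hn : n < P.length
    · exact Adj.reachable (by simpa using P.adj_getVert_succ hn)
    · have e : P.getVert n = P.getVert (n + 1) := by
        rw [P.getVert_of_length_le (by omega), P.getVert_of_length_le (by omega)]
      simp only [e]
      exact Reachable.refl _

/-- Restoring a deleted simplicial vertex does not merge components: the component map induced by
the inclusion of `G - S` into `G - (S \ {u})` is injective, since a walk through `u` can be
short-cut by the edge between the neighbours of `u` on it. -/
lemma numCompDel_le_erase {V : Type} [Fintype V] [DecidableEq V] (G : SimpleGraph V) (u : V)
    (hu : ∀ x y : V, G.Adj u x → G.Adj u y → x ≠ y → G.Adj x y) (S : Finset V) :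
    numCompDel G S ≤ numCompDel G (S.erase u) := by
  have hsub : ((↑S : Set V)ᶜ) ⊆ ((↑(S.erase u) : Set V)ᶜ) := by
    intro x hx
    simp only [Set.mem_compl_iff, Finset.mem_coe, Finset.mem_erase] at hx ⊢
    tauto
  by_cases huS : u ∈ S
  swap
  · rw [Finset.erase_eq_of_notMem huS]
  refine Nat.card_le_card_of_injective
    (ConnectedComponent.map (induceHomOfLE G hsub).toHom) ?_
  intro C D
  induction C using ConnectedComponent.ind with | _ a
  induction D using ConnectedComponent.ind with | _ b
  intro h
  simp only [ConnectedComponent.map_mk, ConnectedComponent.eq] at h ⊢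
  -- Induction along a walk from `a`; when the walk stands at `u`, which is not in `G - S`, the
  -- hypothesis carried along is that all neighbours of `u` in `G - S` are reachable from `a`.
  have key : ∀ c, Relation.ReflTransGen (G.induce ((↑(S.erase u) : Set V)ᶜ)).Adj
      ((induceHomOfLE G hsub).toHom a) c →
      ∀ d : ((↑S : Set V)ᶜ : Set V), (d.1 = c.1 ∨ c.1 = u ∧ G.Adj u d.1) →
      (G.induce ((↑S : Set V)ᶜ)).Reachable a d := by
    intro c hc
    induction hc with
    | refl =>
      rintro d (hd | ⟨hd, -⟩)
      · have : d = a := Subtype.ext hd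
        rw [this]
      · exact absurd (hd.symm ▸ huS : a.1 ∈ S) a.2
    | @tail c c' _ hadj ih =>
      have hadj' : G.Adj c.1 c'.1 := hadj
      rintro d hd
      by_cases hcu : c.1 = u
      · rcases hd with hd | ⟨hd, -⟩
        · exact ih d (Or.inr ⟨hcu, by rw [hcu] at hadj'; rw [hd]; exact hadj'⟩)
        · rw [hcu, hd] at hadj'
          exact absurd rfl hadj'.ne
      · have hcS : c.1 ∈ ((↑S : Set V)ᶜ) := by
          have := c.2
          simp only [Set.mem_compl_iff, Finset.mem_coe, Finset.mem_erase] at this ⊢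
          tauto
        have h1 := ih ⟨c.1, hcS⟩ (Or.inl rfl)
        rcases hd with hd | ⟨hd, hud⟩
        · refine h1.trans (Adj.reachable ?_)
          change G.Adj c.1 d.1
          rw [hd]; exact hadj'
        · by_cases hcd : c.1 = d.1
          · have : d = ⟨c.1, hcS⟩ := Subtype.ext hcd.symm
            rw [this]; exact h1
          · refine h1.trans (Adj.reachable ?_)
            exact hu c.1 d.1 (by rw [hd] at hadj'; exact hadj'.symm) hud hcd
  exact key _ ((reachable_iff_reflTransGen _ _).1 h) b (Or.inl rfl)

/-- The case of the bound in which neither end-vertex of the stave is deleted. -/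
lemma numCompDel_add_le {V : Type} [Fintype V] [DecidableEq V]
    (G : SimpleGraph V) (u w : V)
    (p : ℕ) (P : Fin p → G.Walk u w)
    (hpath : ∀ i, (P i).IsPath)
    (hdisj : ∀ i j, i ≠ j → ∀ v, v ∈ (P i).support → v ∈ (P j).support → v = u ∨ v = w)
    (hcover : ∀ v : V, ∃ i, v ∈ (P i).support)
    (hdom : ∀ i, ∀ x : V, (x ∈ (P i).support ∧ x ≠ u ∧ x ≠ w) ∨
      ∃ y : V, (y ∈ (P i).support ∧ y ≠ u ∧ y ≠ w) ∧ G.Adj x y)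
    (S : Finset V) (huS : u ∉ S) (hwS : w ∉ S) (h2 : 2 ≤ numCompDel G S) :
    numCompDel G S + p ≤ S.card + 2 := by
  classical
  set H := G.induce ((↑S : Set V)ᶜ) with hH
  -- A vertex of `S` determines its position in the stave.
  have huniq : ∀ i i' j j', (P i).getVert j ∈ S → (P i).getVert j = (P i').getVert j' →
      i = i' ∧ j = j' := by
    intro i i' j j' hS he
    have hlen : ∀ i j, (P i).getVert j ∈ S → j ≤ (P i).length := by
      intro i j hj
      by_contra hlt
      rw [(P i).getVert_of_length_le (by omega)] at hj
      exact hwS hj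
    have hii : i = i' := by
      by_contra hne
      rcases hdisj i i' hne _ ((P i).getVert_mem_support j)
        (he ▸ (P i').getVert_mem_support j') with h | h
      · exact huS (h ▸ hS)
      · exact hwS (h ▸ hS)
    subst hii
    exact ⟨rfl, (hpath i).getVert_injOn (hlen i j hS) (hlen i j' (he ▸ hS)) he⟩
  have hmeet : ∀ i, ∃ j, (P i).getVert j ∈ S := by
    intro i
    by_contra hno
    push Not at hno
    have hon : ∀ x (hx : x ∈ ((↑S : Set V)ᶜ)), x ∈ (P i).support →
        H.Reachable ⟨u, by simpa using huS⟩ ⟨x, hx⟩ := by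
      intro x hx hxs
      obtain ⟨n, rfl, -⟩ := Walk.mem_support_iff_exists_getVert.1 hxs
      simpa using reachable_getVert_of_avoid S (P i) 0 n (Nat.zero_le _) fun k _ _ => hno k
    have hall : ∀ x : ((↑S : Set V)ᶜ : Set V), H.Reachable ⟨u, by simpa using huS⟩ x := by
      rintro ⟨x, hx⟩
      rcases hdom i x with ⟨h, -⟩ | ⟨y, ⟨hy, -⟩, hxy⟩
      · exact hon x hx h
      · have hyS : y ∈ ((↑S : Set V)ᶜ) := by
          obtain ⟨n, rfl, -⟩ := Walk.mem_support_iff_exists_getVert.1 hy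
          simpa using hno n
        exact (hon y hyS hy).trans (Adj.reachable (by simpa [hH] using hxy.symm))
    have : Subsingleton H.ConnectedComponent := by
      constructor
      intro C D
      induction C using ConnectedComponent.ind with | _ a
      induction D using ConnectedComponent.ind with | _ b
      exact ConnectedComponent.sound ((hall a).symm.trans (hall b))
    have h1 : Nat.card H.ConnectedComponent ≤ 1 := Finite.card_le_one_iff_subsingleton.2 this
    have h3 : numCompDel G S = Nat.card H.ConnectedComponent := rfl
    omega
  let first : Fin p → V := fun i => (P i).getVert (Nat.find (hmeet i))
  have hfS : ∀ i, first i ∈ S := fun i => Nat.find_spec (hmeet i)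
  have hfinj : Function.Injective first := fun i i' h => (huniq i i' _ _ (hfS i) h).1
  let T : Finset V := S \ Finset.univ.image first
  have hT : T.card + p = S.card := by
    have hsub : Finset.univ.image first ⊆ S := by
      intro x hx
      obtain ⟨i, -, rfl⟩ := Finset.mem_image.1 hx
      exact hfS i
    have h := Finset.card_sdiff_add_card_eq_card hsub
    rwa [Finset.card_image_of_injective _ hfinj, Finset.card_univ, Fintype.card_fin] at h
  let cu : H.ConnectedComponent := H.connectedComponentMk ⟨u, by simpa using huS⟩
  let cw : H.ConnectedComponent := H.connectedComponentMk ⟨w, by simpa using hwS⟩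
  have hex : ∀ C : H.ConnectedComponent, C ≠ cu → C ≠ cw → ∃ s ∈ T, ∃ i j,
      (P i).getVert (j + 1) = s ∧ ∃ ha : (P i).getVert j ∈ ((↑S : Set V)ᶜ),
        H.connectedComponentMk ⟨(P i).getVert j, ha⟩ = C := by
    intro C hCu hCw
    induction C using ConnectedComponent.ind with | _ v
    obtain ⟨v, hv⟩ := v
    obtain ⟨i, hi⟩ := hcover v
    obtain ⟨m, rfl, hm⟩ := Walk.mem_support_iff_exists_getVert.1 hi
    have hn : ∃ n, m ≤ n ∧ (P i).getVert n ∈ S := by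
      by_contra hno
      push Not at hno
      apply hCw
      have := reachable_getVert_of_avoid S (P i) m _ hm fun k hk _ => hno k hk
      exact ConnectedComponent.sound (by simpa using this)
    obtain ⟨hmn, hnS⟩ := Nat.find_spec hn
    have hmin := fun k hk => Nat.find_min hn (m := k) hk
    set n := Nat.find hn
    have hne : n ≠ m := by
      intro h
      rw [h] at hnS
      exact hv hnS
    obtain ⟨j, hj⟩ : ∃ j, n = j + 1 := ⟨n - 1, by omega⟩
    have hreach := reachable_getVert_of_avoid S (P i) m j (by omega)
      fun k h1 h2 h3 => hmin k (by omega) ⟨h1, h3⟩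
    refine ⟨(P i).getVert n, ?_, i, j, by rw [hj],
      fun h => hmin j (by omega) ⟨by omega, h⟩, (ConnectedComponent.sound hreach).symm⟩
    refine Finset.mem_sdiff.2 ⟨hnS, fun himg => ?_⟩
    obtain ⟨i', -, h'⟩ := Finset.mem_image.1 himg
    obtain ⟨rfl, hnn⟩ := huniq i i' _ _ hnS h'.symm
    apply hCu
    have := reachable_getVert_of_avoid S (P i) 0 m (Nat.zero_le _)
      fun k _ h2 => Nat.find_min (hmeet i) (by omega)
    exact (ConnectedComponent.sound (by simpa using this)).symm
  have : Fintype H.ConnectedComponent := Fintype.ofFinite _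
  let A : Finset H.ConnectedComponent := Finset.univ \ {cu, cw}
  have hA : ∀ C ∈ A, C ≠ cu ∧ C ≠ cw := by
    intro C hC
    simpa [A] using hC
  have : Nonempty V := ⟨u⟩
  choose! g hgT hg using fun C (hC : C ∈ A) => hex C (hA C hC).1 (hA C hC).2
  have hAT : A.card ≤ T.card := by
    refine Finset.card_le_card_of_injOn g hgT ?_
    intro C hC D hD hCD
    obtain ⟨i, j, hs, ha, rfl⟩ := hg C hC
    obtain ⟨i', j', hs', ha', rfl⟩ := hg D hD
    have hS := (Finset.mem_sdiff.1 (hgT _ hC)).1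
    rw [← hs] at hS
    obtain ⟨rfl, hjj⟩ := huniq i i' _ _ hS (hs.trans (hCD.trans hs'.symm))
    obtain rfl : j = j' := by omega
    rfl
  have hcard : Fintype.card H.ConnectedComponent ≤ A.card + 2 := by
    have h1 : Fintype.card H.ConnectedComponent - ({cu, cw} : Finset _).card ≤ A.card := by
      rw [← Finset.card_univ]
      exact Finset.le_card_sdiff _ _
    have h3 : ({cu, cw} : Finset H.ConnectedComponent).card ≤ 2 := Finset.card_le_two
    omega
  have : numCompDel G S = Fintype.card H.ConnectedComponent := Nat.card_eq_fintype_card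
  omega

/-- If a non-complete finite graph `G` has a spanning `p`-stave (`p ≥ 1`) between two
distinct simplicial vertices `u` and `w` such that the internal vertices of each path of
the stave dominate `G`, then `scat(G) ≤ 2 - p`. -/
theorem scatAtMost_of_dominating_stave {V : Type} [Fintype V] [DecidableEq V]
    (G : SimpleGraph V) (hG : G ≠ ⊤) (u w : V) (huw : u ≠ w)
    (hu : ∀ x y : V, G.Adj u x → G.Adj u y → x ≠ y → G.Adj x y)
    (hw : ∀ x y : V, G.Adj w x → G.Adj w y → x ≠ y → G.Adj x y)
    (p : ℕ) (hp : 1 ≤ p)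
    (P : Fin p → G.Walk u w)
    (hpath : ∀ i, (P i).IsPath)
    (hdisj : ∀ i j, i ≠ j → ∀ v, v ∈ (P i).support → v ∈ (P j).support → v = u ∨ v = w)
    (hcover : ∀ v : V, ∃ i, v ∈ (P i).support)
    (hdom : ∀ i, ∀ x : V, (x ∈ (P i).support ∧ x ≠ u ∧ x ≠ w) ∨
      ∃ y : V, (y ∈ (P i).support ∧ y ≠ u ∧ y ≠ w) ∧ G.Adj x y) :
    ScatAtMost G (2 - (p : ℤ)) := by
  intro S h2
  have h1 := numCompDel_le_erase G u hu S
  have h3 := numCompDel_le_erase G w hw (S.erase u)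
  have h4 := numCompDel_add_le G u w p P hpath hdisj hcover hdom ((S.erase u).erase w)
    (by simp) (by simp) (by omega)
  have h5 : ((S.erase u).erase w).card ≤ S.card :=
    (Finset.card_erase_le).trans Finset.card_erase_le
  omega
end

section
/- Let G be a finite interval graph with interval representation (I_v), and let u, w be distinct vertices with I_u = [a,a] and I_w = [b,b], where a ≤ ℓ(v) for every vertex v and b ≥ r(v) for every vertex v. Let P be any path in G with end-vertices u and w that has at least one internal vertex. Then the set of internal vertices of P dominates G. -/
/-!
The internal vertices of `P` cover every point `t` of `[a, b]`; applying this to `t = l x`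
gives an internal vertex whose interval meets that of `x`. To see the covering, start at the
second vertex of `P`, whose interval contains `a`, and walk towards `w`: as long as the current
interval ends before `t`, the next one still starts before `t`, and it cannot be the interval
`[b, b]` of `w` because `t ≤ b`. Hence some interval containing `t` is met before `w`
(`exists_mem_support_covering`).
-/

open SimpleGraph

/-- Along a walk to `w`, consecutive intervals overlap, so a point `t` lying between the left
end of the first interval and the left end of the last one is covered by a vertex other
than `w`. -/
theorem exists_mem_support_covering {V : Type} {G : SimpleGraph V} {l r : V → ℝ}
    (hmeet : ∀ v₁ v₂ : V, G.Adj v₁ v₂ → l v₂ ≤ r v₁) {t : ℝ} {p w : V}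
    (Q : G.Walk p w) (hpw : p ≠ w) (hp : l p ≤ t) (ht : t ≤ l w) :
    ∃ y ∈ Q.support, y ≠ w ∧ l y ≤ t ∧ t ≤ r y := by
  induction Q with
  | nil => exact absurd rfl hpw
  | @cons p q w h Q ih =>
    by_cases hr : t ≤ r p
    · exact ⟨p, by simp, hpw, hp, hr⟩
    · have hq := hmeet p q h
      have hqw : q ≠ w := by
        rintro rfl
        linarith
      obtain ⟨y, hy, hy'⟩ := ih hqw (by linarith) ht
      exact ⟨y, by simp [hy], hy'⟩

/-- Let `G` be a finite interval graph with an interval representation in which `u` and `w`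
are distinct vertices whose intervals are the single points `a` and `b`, with `a` the
leftmost point and `b` the rightmost point of the representation. Then the set of internal
vertices of any path in `G` from `u` to `w` having at least one internal vertex
dominates `G`. -/
theorem internal_vertices_dominate {V : Type} [Fintype V] [DecidableEq V]
    (G : SimpleGraph V)
    (l r : V → ℝ) (hlr : ∀ v, l v ≤ r v)
    (hadj : ∀ v₁ v₂ : V, v₁ ≠ v₂ →
      (G.Adj v₁ v₂ ↔ (Set.Icc (l v₁) (r v₁) ∩ Set.Icc (l v₂) (r v₂)).Nonempty))
    (u w : V) (huw : u ≠ w) (a b : ℝ)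
    (hul : l u = a) (hur : r u = a) (hwl : l w = b) (hwr : r w = b)
    (ha : ∀ v, a ≤ l v) (hb : ∀ v, r v ≤ b)
    (P : G.Walk u w) (hP : P.IsPath)
    (hint : ∃ v ∈ P.support, v ≠ u ∧ v ≠ w) :
    ∀ x : V, (x ∈ P.support ∧ x ≠ u ∧ x ≠ w) ∨
      ∃ y : V, (y ∈ P.support ∧ y ≠ u ∧ y ≠ w) ∧ G.Adj x y := by
  intro x
  have hmeet : ∀ v₁ v₂ : V, G.Adj v₁ v₂ → l v₂ ≤ r v₁ := by
    intro v₁ v₂ h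
    obtain ⟨s, hs₁, hs₂⟩ := (hadj v₁ v₂ h.ne).1 h
    exact hs₂.1.trans hs₁.2
  cases P with
  | nil => exact absurd rfl huw
  | @cons _ p _ h Q =>
    rw [SimpleGraph.Walk.cons_isPath_iff] at hP
    obtain ⟨hQ, huQ⟩ := hP
    -- If the second vertex were `w`, the path would be the single edge `uw`.
    have hpw : p ≠ w := by
      rintro rfl
      obtain rfl := (SimpleGraph.Walk.isPath_iff_nil.1 hQ).eq_nil
      obtain ⟨v, hv, hvu, hvp⟩ := hint
      simp [hvu, hvp] at hv
    have hpx : l p ≤ l x := (hmeet u p h).trans (hur.le.trans (ha x))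
    have hxw : l x ≤ l w := (hlr x).trans ((hb x).trans hwl.ge)
    obtain ⟨y, hy, hyw, hly, hry⟩ := exists_mem_support_covering hmeet Q hpw hpx hxw
    have hyu : y ≠ u := by
      rintro rfl
      exact huQ hy
    have hyP : y ∈ (SimpleGraph.Walk.cons h Q).support := by simp [hy]
    by_cases hxy : x = y
    · subst hxy
      exact Or.inl ⟨hyP, hyu, hyw⟩
    · exact Or.inr ⟨y, ⟨hyP, hyu, hyw⟩,
        (hadj x y hxy).2 ⟨l x, ⟨le_rfl, hlr x⟩, ⟨hly, hry⟩⟩⟩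
end

section
/- Let G be a finite interval graph with at least 3 vertices, with interval representation (I_v), and let u, w be distinct vertices with I_u = [a,a] and I_w = [b,b], where a ≤ ℓ(v) for every vertex v and b ≥ r(v) for every vertex v. Then G has a Hamilton cycle if and only if G contains a spanning 2-stave between u and w. -/
/-!
The vertices `u` and `w` cut a Hamilton cycle into two internally disjoint paths that cover all
vertices, and conversely two such paths, one of them reversed, concatenate to a closed walk through every vertex. The latter is a cycle by
`SimpleGraph.Walk.IsPath.isCycle_append`, which needs one of the two paths to have length at least
two; were both of them the edge `uw`, the graph would have only two vertices.
-/

open SimpleGraph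

/-- Let `G` be a finite interval graph on at least `3` vertices with an interval
representation in which `u` and `w` are distinct vertices whose intervals are the single
points `a` and `b`, with `a` the leftmost point and `b` the rightmost point of the
representation. Then `G` has a Hamilton cycle iff `G` has a spanning `2`-stave between
`u` and `w`. -/
theorem hamiltonianCycle_iff_spanning_two_stave {V : Type} [Fintype V] [DecidableEq V]
    (G : SimpleGraph V) (hcard : 3 ≤ Fintype.card V)
    (l r : V → ℝ) (hlr : ∀ v, l v ≤ r v)
    (hadj : ∀ v₁ v₂ : V, v₁ ≠ v₂ →
      (G.Adj v₁ v₂ ↔ (Set.Icc (l v₁) (r v₁) ∩ Set.Icc (l v₂) (r v₂)).Nonempty))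
    (u w : V) (huw : u ≠ w) (a b : ℝ)
    (hul : l u = a) (hur : r u = a) (hwl : l w = b) (hwr : r w = b)
    (ha : ∀ v, a ≤ l v) (hb : ∀ v, r v ≤ b) :
    (∃ (v : V) (c : G.Walk v v), c.IsHamiltonianCycle) ↔ HasSpanningStave G u w 2 := by
  constructor
  · rintro ⟨v, c₀, hc₀⟩
    have hu₀ : u ∈ c₀.support := hc₀.mem_support u
    obtain ⟨c, hc, hcs⟩ : ∃ c : G.Walk u u, c.IsCycle ∧ ∀ x, x ∈ c.support := by
      refine ⟨c₀.rotate u hu₀, hc₀.isCycle.rotate hu₀, fun x => ?_⟩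
      rw [Walk.mem_support_rotate_iff]
      exact hc₀.mem_support x
    have hw : w ∈ c.support := hcs w
    obtain ⟨p, q, rfl⟩ := (Walk.mem_support_iff_exists_append).1 hw
    have hp : ¬ p.Nil := Walk.not_nil_of_ne huw
    have hq : ¬ q.Nil := Walk.not_nil_of_ne huw.symm
    have hnd := hc.support_nodup
    rw [Walk.tail_support_append, List.nodup_append'] at hnd
    have hdisj : ∀ x, x ∈ p.support → x ∈ q.support → x = u ∨ x = w := by
      intro x hxp hxq
      rw [Walk.mem_support_iff] at hxp hxq
      rcases hxp with h | h
      · exact Or.inl h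
      rcases hxq with h' | h'
      · exact Or.inr h'
      exact (hnd.2.2 h h').elim
    refine ⟨![p, q.reverse], ?_, ?_, ?_⟩
    · rw [Fin.forall_fin_two]
      exact ⟨hc.isPath_of_append_left hq, (hc.isPath_of_append_right hp).reverse⟩
    · intro i j hij x
      fin_cases i <;> fin_cases j <;> simp at hij ⊢
      · exact hdisj x
      · exact fun h h' => hdisj x h' h
    · intro x
      rw [Fin.exists_fin_two]
      simpa using hcs x
  · rintro ⟨P, hP, hdisj, hcov⟩
    have hlen : 1 < (P 0).length ∨ 1 < (P 1).reverse.length := by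
      by_contra! h
      rw [Walk.length_reverse] at h
      have hshort : ∀ p : G.Walk u w, p.length ≤ 1 → ∀ x ∈ p.support, x = u ∨ x = w := by
        intro p hp x hx
        cases p with
        | nil => exact (huw rfl).elim
        | cons e q =>
          cases q with
          | nil => simpa using hx
          | cons e' q' => simp at hp
      have hsub : (Finset.univ : Finset V) ⊆ {u, w} := by
        intro x _
        obtain ⟨i, hi⟩ := hcov x
        fin_cases i
        · simpa using hshort _ h.1 x hi
        · simpa using hshort _ h.2 x hi
      have h2 := (Finset.card_le_card hsub).trans Finset.card_le_two
      rw [Finset.card_univ] at h2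
      omega
    have htail : (P 0).support.tail.Disjoint (P 1).reverse.support.tail := by
      intro x hx hx'
      have h0 := (hP 0).support_nodup
      have h1 := (hP 1).reverse.support_nodup
      rw [← Walk.cons_tail_support, List.nodup_cons] at h0 h1
      have hx1 : x ∈ (P 1).support := by
        simpa using List.mem_of_mem_tail hx'
      rcases hdisj 0 1 (by decide) x (List.mem_of_mem_tail hx) hx1 with rfl | rfl
      · exact h0.1 hx
      · exact h1.1 hx'
    have hc : ((P 0).append (P 1).reverse).IsCycle :=
      (hP 0).isCycle_append (hP 1).reverse htail hlen
    refine ⟨u, _, Walk.isHamiltonianCycle_iff_isCycle_and_support_count_tail_eq_one.2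
      ⟨hc, fun x => List.count_eq_one_of_mem hc.support_nodup ?_⟩⟩
    have hx : x ∈ ((P 0).append (P 1).reverse).support := by
      obtain ⟨i, hi⟩ := hcov x
      rw [Walk.mem_support_append_iff, Walk.support_reverse, List.mem_reverse]
      fin_cases i
      · exact Or.inl hi
      · exact Or.inr hi
    -- The base vertex `u` is also the endpoint, so dropping its first occurrence loses nothing.
    rcases (Walk.mem_support_iff _).1 hx with rfl | h
    · exact Walk.end_mem_tail_support hc.not_nil
    · exact h
end
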